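/- Let d be a positive integer, J ⊊ I two nonzero square-free monomial ideals of S with I generated by square-free monomials of degree ≥ d and J generated by square-free monomials of degree ≥ d+1, and let H be an ideal generated by square-free monomials of degree d+1. Then depth_S (I/J) = d if and only if depth_S ((I+H)/J) = d. -/

import Mathlib

open MvPolynomial

/-- The square-free monomial `∏ i ∈ T, X i` associated to a set `T` of variables. -/
noncomputable def sqMon (K : Type) [Field K] {n : ℕ} (T : Finset (Fin n)) :
    MvPolynomial (Fin n) K :=
  ∏ i ∈ T, X i

/-- `GenBySqMonOfDeg K P I` means: `I` is generated by square-free monomials whose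
degrees satisfy the predicate `P`. -/
def GenBySqMonOfDeg (K : Type) [Field K] {n : ℕ} (P : ℕ → Prop)
    (I : Ideal (MvPolynomial (Fin n) K)) : Prop :=
  ∃ G : Set (Finset (Fin n)), (∀ T ∈ G, P T.card) ∧ I = Ideal.span (sqMon K '' G)

/-- `rho K d I` : the number of square-free monomials of degree `d` belonging to `I`. -/
noncomputable def rho (K : Type) [Field K] {n : ℕ} (d : ℕ)
    (I : Ideal (MvPolynomial (Fin n) K)) : ℕ :=
  Set.ncard {T : Finset (Fin n) | T.card = d ∧ sqMon K T ∈ I}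

/-- The maximal graded ideal `(x_1, …, x_n)` of `K[x_1, …, x_n]`. -/
noncomputable def maxGraded (K : Type) [Field K] (n : ℕ) :
    Ideal (MvPolynomial (Fin n) K) :=
  Ideal.span (Set.range (X : Fin n → MvPolynomial (Fin n) K))

/-- The depth of the module `M` with respect to the ideal `I` : the supremum of the
lengths of `M`-regular sequences consisting of elements of `I`. -/
noncomputable def moduleDepth {R : Type} [CommRing R] (I : Ideal R)
    (M : Type) [AddCommGroup M] [Module R M] : ℕ∞ :=
  sSup {k : ℕ∞ | ∃ rs : List R, k = (rs.length : ℕ∞) ∧ (∀ r ∈ rs, r ∈ I) ∧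
    RingTheory.Sequence.IsRegular M rs}

/-- The `R`-module `I/J` (more precisely `I/(I ∩ J)`, which is `I/J` when `J ≤ I`). -/
noncomputable abbrev idealQuot {R : Type} [CommRing R] (I J : Ideal R) : Type :=
  ↥I ⧸ (Submodule.comap I.subtype (J : Submodule R R))


section Homological

open CategoryTheory CategoryTheory.Abelian

/-- Vanishing of `Ext^i(R/m, M)` for `i < k`. -/
def ExtVan {R : Type} [CommRing R] (m : Ideal R) (k : ℕ) (M : Type) [AddCommGroup M]
    [Module R M] : Prop :=
  ∀ i < k, Subsingleton (Ext (ModuleCat.of R (R ⧸ m)) (ModuleCat.of R M) i)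

variable {R : Type} [CommRing R] {m : Ideal R} {A B C : Type} [AddCommGroup A] [AddCommGroup B]
  [AddCommGroup C] [Module R A] [Module R B] [Module R C]

lemma mkShortExact (f : A →ₗ[R] B) (g : B →ₗ[R] C) (hf : Function.Injective f)
    (hg : Function.Surjective g) (h : Function.Exact f g) :
    (ShortComplex.mk (ModuleCat.ofHom f) (ModuleCat.ofHom g)
      (by ext x; exact h.apply_apply_eq_zero x)).ShortExact :=
  ModuleCat.shortComplex_shortExact _ h hf hg

lemma ExtVan.ext {k : ℕ} (f : A →ₗ[R] B) (g : B →ₗ[R] C) (hf : Function.Injective f)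
    (hg : Function.Surjective g) (h : Function.Exact f g) (hA : ExtVan m k A)
    (hC : ExtVan m k C) : ExtVan m k B := by
  intro i hi
  have hS := mkShortExact f g hf hg h
  refine ⟨fun x y => ?_⟩
  have key : ∀ z : Ext (ModuleCat.of R (R ⧸ m)) (ModuleCat.of R B) i, z = 0 := by
    intro z
    have := hC i hi
    obtain ⟨w, hw⟩ := Ext.covariant_sequence_exact₂ _ hS z (Subsingleton.elim _ _)
    have := hA i hi
    rw [← hw, Subsingleton.elim w 0, Ext.zero_comp]
  rw [key x, key y]

lemma ExtVan.sub {k : ℕ} (f : A →ₗ[R] B) (g : B →ₗ[R] C) (hf : Function.Injective f)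
    (hg : Function.Surjective g) (h : Function.Exact f g) (hB : ExtVan m k B)
    (hC : ExtVan m k C) : ExtVan m k A := by
  intro i hi
  have hS := mkShortExact f g hf hg h
  refine ⟨fun x y => ?_⟩
  have key : ∀ z : Ext (ModuleCat.of R (R ⧸ m)) (ModuleCat.of R A) i, z = 0 := by
    intro z
    have := hB i hi
    have h0 : z.comp (Ext.mk₀ (ModuleCat.ofHom f)) (add_zero i) = 0 := Subsingleton.elim _ _
    rcases i with _ | j
    · have := hS.mono_f
      refine Ext.postcomp_mk₀_injective_of_mono (ModuleCat.of R (R ⧸ m)) (ModuleCat.ofHom f) ?_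
      simpa using h0
    · obtain ⟨w, hw⟩ := Ext.covariant_sequence_exact₁ _ hS z h0 rfl
      have := hC j (by omega)
      rw [← hw, Subsingleton.elim w 0, Ext.zero_comp]
  rw [key x, key y]

lemma ExtVan.smul {k : ℕ} {r : R} (hr : r ∈ m) (g : A →ₗ[R] C)
    (hf : IsSMulRegular A r)
    (hg : Function.Surjective g) (h : Function.Exact (LinearMap.lsmul R A r) g)
    (hC : ExtVan m k C) : ExtVan m (k + 1) A := by
  intro i hi
  have hS := mkShortExact (LinearMap.lsmul R A r) g hf hg h
  refine ⟨fun x y => ?_⟩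
  have key : ∀ z : Ext (ModuleCat.of R (R ⧸ m)) (ModuleCat.of R A) i, z = 0 := by
    intro z
    have hann : r ∈ Module.annihilator R (ModuleCat.of R (R ⧸ m)) := by
      change r ∈ Module.annihilator R (R ⧸ m)
      rw [Ideal.annihilator_quotient]; exact hr
    have h1 := Ext.postcomp_smul_id_eq_zero_of_mem_annihilator (M := ModuleCat.of R A) hann i
    have h0 : z.comp (Ext.mk₀ (ModuleCat.ofHom (LinearMap.lsmul R A r))) (add_zero i) = 0 :=
      congrArg (fun q => q.hom z) h1
    rcases i with _ | j
    · have := hS.mono_f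
      refine Ext.postcomp_mk₀_injective_of_mono (ModuleCat.of R (R ⧸ m))
        (ModuleCat.ofHom (LinearMap.lsmul R A r)) ?_
      simpa using h0
    · obtain ⟨w, hw⟩ := Ext.covariant_sequence_exact₁ _ hS z h0 rfl
      have := hC j (by omega)
      rw [← hw, Subsingleton.elim w 0, Ext.zero_comp]
  rw [key x, key y]

lemma ExtVan.of_subsingleton {k : ℕ} [Subsingleton A] : ExtVan m k A := by
  intro i _
  refine ⟨fun x y => ?_⟩
  have key : ∀ z : Ext (ModuleCat.of R (R ⧸ m)) (ModuleCat.of R A) i, z = 0 := by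
    intro z
    have : 𝟙 (ModuleCat.of R A) = 0 := by ext x; exact Subsingleton.elim (α := A) _ _
    rw [← Ext.comp_mk₀_id z, this, Ext.mk₀_zero, Ext.comp_zero]
  rw [key x, key y]

lemma ExtVan.equiv {k : ℕ} (e : A ≃ₗ[R] B) (hA : ExtVan m k A) : ExtVan m k B := by
  refine ExtVan.ext (C := PUnit) (e : A →ₗ[R] B) (0 : B →ₗ[R] PUnit) e.injective ?_ ?_ hA
    ExtVan.of_subsingleton
  · intro x; exact ⟨0, rfl⟩
  · intro x; simp

lemma ExtVan.mono {k l : ℕ} (h : k ≤ l) (hA : ExtVan m l A) : ExtVan m k A :=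
  fun i hi => hA i (by omega)

lemma le_moduleDepth_iff [IsNoetherianRing R] [Module.Finite R A]
    (h : m • (⊤ : Submodule R A) < ⊤) (k : ℕ) :
    (k : ℕ∞) ≤ moduleDepth m A ↔ ExtVan m k A := by
  have hsupp : Module.support R (ModuleCat.of R (R ⧸ m)) = PrimeSpectrum.zeroLocus m := by
    change Module.support R (R ⧸ m) = _
    rw [Module.support_eq_zeroLocus, Ideal.annihilator_quotient]
  constructor
  · intro hk
    rcases k with _ | j
    · intro i hi; omega
    · have : (j : ℕ∞) < moduleDepth m A :=
        lt_of_lt_of_le (by exact_mod_cast Nat.lt_succ_self j) hk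
      obtain ⟨_, ⟨rs, rfl, hmem, hreg⟩, hlt⟩ := lt_sSup_iff.mp this
      have hlt' : j < rs.length := by exact_mod_cast hlt
      intro i hi
      exact ModuleCat.subsingleton_ext_of_exists_isRegular m (ModuleCat.of R (R ⧸ m)) hsupp.subset
        (ModuleCat.of R A) h rs hmem hreg i (by omega)
  · intro hk
    obtain ⟨rs, hl, hmem, hreg⟩ := ModuleCat.exists_isRegular_of_exists_subsingleton_ext m k
      (ModuleCat.of R A) h (ModuleCat.of R (R ⧸ m)) hsupp hk
    exact le_sSup ⟨rs, by rw [hl], hmem, hreg⟩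

end Homological

section Mono

variable {K : Type} [Field K] {n : ℕ}

/-- exponent vector of a square-free monomial -/
noncomputable def expo (T : Finset (Fin n)) : Fin n →₀ ℕ := Finsupp.indicator T (fun _ _ => 1)

lemma expo_apply (T : Finset (Fin n)) (i : Fin n) : expo T i = if i ∈ T then 1 else 0 := by
  simp [expo, Finsupp.indicator_apply]

lemma sqMon_eq (T : Finset (Fin n)) : sqMon K T = monomial (expo T) 1 := by
  rw [monomial_eq, sqMon, Finsupp.prod_fintype _ _ (by simp)]
  simp [expo_apply, Finset.prod_ite_mem, pow_ite]

lemma mem_sq (G : Set (Finset (Fin n))) (f : MvPolynomial (Fin n) K) :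
    f ∈ Ideal.span (sqMon K '' G) ↔ ∀ a ∈ f.support, ∃ U ∈ G, ∀ i ∈ U, a i ≠ 0 := by
  have h : sqMon K '' G = (fun s => monomial s (1 : K)) '' (expo '' G) := by
    rw [Set.image_image]; exact Set.image_congr fun T _ => sqMon_eq T
  rw [h, mem_ideal_span_monomial_image]
  refine forall₂_congr fun a _ => ?_
  rw [Set.exists_mem_image]
  refine exists_congr fun U => and_congr_right fun _ => ?_
  constructor
  · intro hle i hi
    have := hle i
    rw [expo_apply, if_pos hi] at this
    omega
  · intro h i
    rw [expo_apply]
    split_ifs with hi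
    · have := h i hi; omega
    · omega

lemma sq_mem (G : Set (Finset (Fin n))) (T : Finset (Fin n)) :
    sqMon K T ∈ Ideal.span (sqMon K '' G) ↔ ∃ U ∈ G, U ⊆ T := by
  classical
  rw [mem_sq, sqMon_eq, support_monomial, if_neg one_ne_zero]
  simp [expo_apply, Finset.subset_iff]

/-- A square-free monomial ideal contains `x_T` once `c * x_T + ...` is in it -/
lemma sq_mem_of_mul {J : Ideal (MvPolynomial (Fin n) K)} (G : Set (Finset (Fin n)))
    (hJ : J = Ideal.span (sqMon K '' G)) (T : Finset (Fin n)) (f : MvPolynomial (Fin n) K)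
    (a : Fin n →₀ ℕ) (ha : a ∈ f.support) (hT : ∀ i ∉ T, a i = 0)
    (h : f * sqMon K T ∈ J) : sqMon K T ∈ J := by
  subst hJ
  rw [mem_sq] at h
  rw [sq_mem]
  obtain ⟨U, hU, h2⟩ := h (a + expo T) (by
    rw [mem_support_iff, sqMon_eq, coeff_mul_monomial, mul_one]; exact mem_support_iff.mp ha)
  refine ⟨U, hU, fun i hi => ?_⟩
  by_contra hiT
  apply h2 i hi
  simp [hT i hiT, expo_apply, hiT]

lemma smul_lt {I J : Ideal (MvPolynomial (Fin n) K)} (hJI : J < I)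
    (GI GJ : Set (Finset (Fin n))) (hI : I = Ideal.span (sqMon K '' GI))
    (hJ : J = Ideal.span (sqMon K '' GJ)) :
    maxGraded K n • (⊤ : Submodule (MvPolynomial (Fin n) K) (idealQuot I J)) < ⊤ := by
  rw [lt_top_iff_ne_top]
  intro heq
  obtain ⟨r, hr, h0⟩ := Submodule.exists_sub_one_mem_and_smul_eq_zero_of_fg_of_le_smul
    (maxGraded K n) (⊤ : Submodule (MvPolynomial (Fin n) K) (idealQuot I J))
    Module.Finite.fg_top heq.ge
  have hc : (0 : Fin n →₀ ℕ) ∈ r.support := by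
    rw [mem_support_iff]
    intro hz
    have h1 : (0 : Fin n →₀ ℕ) ∈ (r - 1).support := by
      rw [mem_support_iff, coeff_sub, hz]; simp
    rw [maxGraded, ← Set.image_univ, mem_ideal_span_X_image] at hr
    obtain ⟨i, _, hi⟩ := hr 0 h1
    exact hi rfl
  refine absurd hJI (not_lt_of_ge ?_)
  nth_rw 1 [hI]
  rw [Ideal.span_le]
  rintro _ ⟨T, hT, rfl⟩
  have hTI : sqMon K T ∈ I := by rw [hI]; exact Ideal.subset_span ⟨T, hT, rfl⟩
  have := h0 (Submodule.Quotient.mk ⟨sqMon K T, hTI⟩) trivial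
  rw [← Submodule.Quotient.mk_smul, Submodule.Quotient.mk_eq_zero] at this
  exact sq_mem_of_mul GJ hJ T r 0 hc (fun _ _ => rfl) this

lemma X_span_van (A : Finset (Fin n)) :
    ExtVan (maxGraded K n) (n - A.card)
      (MvPolynomial (Fin n) K ⧸ Ideal.span (X '' (A : Set (Fin n)) : Set (MvPolynomial (Fin n) K)))
    := by
  classical
  obtain ⟨k, hk⟩ : ∃ k, n - A.card = k := ⟨_, rfl⟩
  induction k generalizing A with
  | zero => rw [hk]; intro i hi; omega
  | succ k ih =>
    obtain ⟨i, hi⟩ : ∃ i, i ∉ A := by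
      by_contra! h
      have : A = Finset.univ := Finset.eq_univ_iff_forall.mpr h
      rw [this] at hk; simp at hk
    have ih' := ih (insert i A) (by rw [Finset.card_insert_of_notMem hi]; omega)
    rw [hk]
    rw [show n - (insert i A).card = k by rw [Finset.card_insert_of_notMem hi]; omega] at ih'
    have hle : Ideal.span (X '' (A : Set (Fin n)) : Set (MvPolynomial (Fin n) K)) ≤
      Ideal.span (X '' ((insert i A : Finset (Fin n)) : Set (Fin n))) :=
      Ideal.span_mono (Set.image_mono (by simp))
    have hins : Ideal.span (X '' ((insert i A : Finset (Fin n)) : Set (Fin n)) :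
        Set (MvPolynomial (Fin n) K)) = Ideal.span {X i} ⊔ Ideal.span (X '' (A : Set (Fin n))) := by
      rw [Finset.coe_insert, Set.image_insert_eq, Ideal.span_insert]
    refine ExtVan.smul (r := X i) (Ideal.subset_span ⟨i, rfl⟩) (Submodule.factor hle) ?_
      (Submodule.factor_surjective hle) ?_ ih'
    · rw [isSMulRegular_quotient_iff_mem_of_smul_mem]
      intro f hf
      rw [mem_ideal_span_X_image] at hf ⊢
      intro a ha
      obtain ⟨j, hj, hne⟩ := hf (Finsupp.single i 1 + a) (by
        rw [mem_support_iff, smul_eq_mul, coeff_X_mul]; exact mem_support_iff.mp ha)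
      refine ⟨j, hj, ?_⟩
      have : i ≠ j := by rintro rfl; exact hi hj
      simpa [Finsupp.single_apply, this] using hne
    · intro y
      obtain ⟨f, rfl⟩ := Submodule.Quotient.mk_surjective _ y
      rw [show Submodule.factor hle (Submodule.Quotient.mk f) = Submodule.Quotient.mk f from rfl,
        Submodule.Quotient.mk_eq_zero, hins]
      constructor
      · intro h
        obtain ⟨g, hg⟩ := Ideal.mem_span_singleton_sup.mp h
        obtain ⟨b, hb, hh⟩ := hg
        refine ⟨Submodule.Quotient.mk g, ?_⟩
        rw [LinearMap.lsmul_apply, ← Submodule.Quotient.mk_smul, Submodule.Quotient.eq]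
        rw [smul_eq_mul, ← hh, show X i * g - (g * X i + b) = - b by ring]
        exact neg_mem hb
      · rintro ⟨g, hg⟩
        obtain ⟨g, rfl⟩ := Submodule.Quotient.mk_surjective _ g
        rw [LinearMap.lsmul_apply, ← Submodule.Quotient.mk_smul, Submodule.Quotient.eq] at hg
        refine Ideal.mem_span_singleton_sup.mpr ⟨g, -(X i • g - f), neg_mem hg, ?_⟩
        rw [smul_eq_mul]; ring

section seq
variable {R : Type} [CommRing R]

/-- inclusion `J'/J → I/J` -/
noncomputable def quotIncl {J J' I : Ideal R} (h2 : J' ≤ I) :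
    idealQuot J' J →ₗ[R] idealQuot I J :=
  Submodule.mapQ _ _ (Submodule.inclusion h2) (fun _ hx => hx)

/-- projection `I/J → I/J'` -/
noncomputable def quotProj {J J' I : Ideal R} (h1 : J ≤ J') :
    idealQuot I J →ₗ[R] idealQuot I J' :=
  Submodule.mapQ _ _ LinearMap.id (fun _ hx => h1 hx)

lemma quotIncl_inj {J J' I : Ideal R} (h2 : J' ≤ I) :
    Function.Injective (quotIncl (J := J) h2) := by
  rw [← LinearMap.ker_eq_bot, LinearMap.ker_eq_bot']
  intro y hy
  obtain ⟨f, rfl⟩ := Submodule.Quotient.mk_surjective _ y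
  have hy := (Submodule.Quotient.mk_eq_zero _ (x := Submodule.inclusion h2 f)).mp hy
  rw [Submodule.Quotient.mk_eq_zero]
  exact hy

lemma quotProj_surj {J J' I : Ideal R} (h1 : J ≤ J') :
    Function.Surjective (quotProj (I := I) h1) := by
  intro y
  obtain ⟨f, rfl⟩ := Submodule.Quotient.mk_surjective _ y
  exact ⟨Submodule.Quotient.mk f, rfl⟩

lemma quot_exact {J J' I : Ideal R} (h1 : J ≤ J') (h2 : J' ≤ I) :
    Function.Exact (quotIncl (J := J) h2) (quotProj (I := I) h1) := by
  intro y
  obtain ⟨f, rfl⟩ := Submodule.Quotient.mk_surjective _ y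
  rw [quotProj, Submodule.mapQ_apply, Submodule.Quotient.mk_eq_zero]
  constructor
  · intro h
    exact ⟨Submodule.Quotient.mk ⟨f.1, h⟩, rfl⟩
  · rintro ⟨g, hg⟩
    obtain ⟨g, rfl⟩ := Submodule.Quotient.mk_surjective _ g
    have hg := (Submodule.Quotient.eq _ (x := Submodule.inclusion h2 g) (y := f)).mp hg
    have hg' : g.1 - f.1 ∈ J := hg
    change f.1 ∈ J'
    have := J'.sub_mem g.2 (h1 hg')
    simpa using this

end seq

lemma step_van {J : Ideal (MvPolynomial (Fin n) K)} (G : Set (Finset (Fin n)))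
    (hJ : J = Ideal.span (sqMon K '' G)) (T : Finset (Fin n)) (hT : sqMon K T ∉ J)
    (hmax : ∀ i ∉ T, X i * sqMon K T ∈ J) :
    ExtVan (maxGraded K n) T.card (idealQuot (Ideal.span {sqMon K T} ⊔ J) J) := by
  classical
  let φ : MvPolynomial (Fin n) K →ₗ[MvPolynomial (Fin n) K]
      idealQuot (Ideal.span {sqMon K T} ⊔ J) J :=
    LinearMap.toSpanSingleton _ _ (Submodule.Quotient.mk
      ⟨sqMon K T, Ideal.mem_sup_left (Ideal.mem_span_singleton_self _)⟩)
  have hφ : ∀ f, φ f = Submodule.Quotient.mk ⟨f * sqMon K T,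
      Ideal.mul_mem_left _ _ (Ideal.mem_sup_left (Ideal.mem_span_singleton_self _))⟩ := fun f => rfl
  have hsurj : Function.Surjective φ := by
    intro y
    obtain ⟨⟨y, hy⟩, rfl⟩ := Submodule.Quotient.mk_surjective _ y
    obtain ⟨g, b, hb, rfl⟩ := Ideal.mem_span_singleton_sup.mp hy
    refine ⟨g, ?_⟩
    rw [hφ, Submodule.Quotient.eq]
    change g * sqMon K T - (g * sqMon K T + b) ∈ J
    simpa using hb
  have hker : LinearMap.ker φ =
      Ideal.span (X '' ((Tᶜ : Finset (Fin n)) : Set (Fin n)) : Set (MvPolynomial (Fin n) K)) := by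
    apply le_antisymm
    · intro f hf
      rw [LinearMap.mem_ker, hφ, Submodule.Quotient.mk_eq_zero] at hf
      have hf' : f * sqMon K T ∈ J := hf
      rw [mem_ideal_span_X_image]
      intro a ha
      by_contra! hcon
      exact hT (sq_mem_of_mul G hJ T f a ha (fun i hi => hcon i (by simpa using hi)) hf')
    · refine Ideal.span_le.mpr ?_
      rintro _ ⟨i, hi, rfl⟩
      change X i ∈ LinearMap.ker φ
      rw [LinearMap.mem_ker, hφ, Submodule.Quotient.mk_eq_zero]
      exact hmax i (by simpa using hi)
  have h1 := X_span_van (K := K) (Tᶜ)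
  have hc : n - (Tᶜ).card = T.card := by
    have := Finset.card_le_univ T
    rw [Finset.card_compl]; simp at *; omega
  rw [hc] at h1
  exact h1.equiv ((Submodule.quotEquivOfEq _ _ hker.symm).trans
    (φ.quotKerEquivOfSurjective hsurj))

lemma filt_van {I : Ideal (MvPolynomial (Fin n) K)} (GI : Set (Finset (Fin n)))
    (hI : I = Ideal.span (sqMon K '' GI)) (k : ℕ) (N : ℕ) :
    ∀ (J : Ideal (MvPolynomial (Fin n) K)) (GJ : Set (Finset (Fin n))),
    J = Ideal.span (sqMon K '' GJ) → J ≤ I →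
    (∀ T : Finset (Fin n), sqMon K T ∈ I → sqMon K T ∉ J → k ≤ T.card) →
    Set.ncard {T : Finset (Fin n) | sqMon K T ∈ I ∧ sqMon K T ∉ J} = N →
    ExtVan (maxGraded K n) k (idealQuot I J) := by
  classical
  induction N using Nat.strong_induction_on with
  | _ N ih =>
  intro J GJ hJ hJI hdeg hN
  by_cases hne : ({T : Finset (Fin n) | sqMon K T ∈ I ∧ sqMon K T ∉ J}).Nonempty
  · obtain ⟨T, ⟨hTI, hTJ⟩, hmax⟩ := Set.exists_max_image _ Finset.card (Set.toFinite _) hne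
    have hle : Ideal.span {sqMon K T} ⊔ J ≤ I :=
      sup_le ((Ideal.span_singleton_le_iff_mem _).mpr hTI) hJI
    have hTJ' : sqMon K T ∈ Ideal.span {sqMon K T} ⊔ J :=
      Ideal.mem_sup_left (Ideal.mem_span_singleton_self _)
    have h1 := step_van GJ hJ T hTJ (by
      intro i hi
      have he : X i * sqMon K T = sqMon K (insert i T) := by
        rw [sqMon, sqMon, Finset.prod_insert hi]
      by_contra hc
      have := hmax (insert i T) ⟨he ▸ Ideal.mul_mem_left _ _ hTI, he ▸ hc⟩
      rw [Finset.card_insert_of_notMem hi] at this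
      omega)
    have h2 := ih _ (by
        rw [← hN]
        refine Set.ncard_lt_ncard (t := {T : Finset (Fin n) | sqMon K T ∈ I ∧ sqMon K T ∉ J})
          ⟨fun U hU => ⟨hU.1, fun h => hU.2 (Ideal.mem_sup_right h)⟩, fun h => ?_⟩ (Set.toFinite _)
        exact (h ⟨hTI, hTJ⟩).2 hTJ') (Ideal.span {sqMon K T} ⊔ J) (insert T GJ)
      (by rw [Set.image_insert_eq, Ideal.span_insert, hJ]) hle
      (fun U hU hU' => hdeg U hU (fun h => hU' (Ideal.mem_sup_right h))) rfl
    exact ExtVan.ext (quotIncl hle) (quotProj le_sup_right) (quotIncl_inj hle)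
      (quotProj_surj _) (quot_exact _ _) (h1.mono (hdeg T hTI hTJ)) h2
  · have hIJ : I ≤ J := by
      nth_rw 1 [hI]
      rw [Ideal.span_le]
      rintro _ ⟨T, hT, rfl⟩
      by_contra hc
      exact hne ⟨T, by rw [hI]; exact Ideal.subset_span ⟨T, hT, rfl⟩, hc⟩
    have : Subsingleton (idealQuot I J) := by
      rw [Submodule.Quotient.subsingleton_iff]
      rw [Submodule.comap_subtype_eq_top]; exact hIJ
    exact ExtVan.of_subsingleton

end Mono

/-- Lemma 1.4. -/
theorem stmt_2 (n : ℕ) (K : Type) [Field K] (d : ℕ) (hd : 0 < d)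
    (I J H : Ideal (MvPolynomial (Fin n) K)) (hI0 : I ≠ ⊥) (hJ0 : J ≠ ⊥)
    (hJI : J < I) (hI : GenBySqMonOfDeg K (fun k => d ≤ k) I)
    (hJ : GenBySqMonOfDeg K (fun k => d + 1 ≤ k) J)
    (hH : GenBySqMonOfDeg K (fun k => k = d + 1) H) :
    moduleDepth (maxGraded K n) (idealQuot I J) = (d : ℕ∞) ↔
      moduleDepth (maxGraded K n) (idealQuot (I + H) J) = (d : ℕ∞) := by

  obtain ⟨GI, hGI, hI⟩ := hI
  obtain ⟨GJ, hGJ, hJ⟩ := hJ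
  obtain ⟨GH, hGH, hH⟩ := hH
  have hIH : I + H = Ideal.span (sqMon K '' (GI ∪ GH)) := by
    rw [Set.image_union, Ideal.span_union, ← hI, ← hH]; rfl
  have hle : I ≤ I + H := le_sup_left
  have hdI : ∀ T : Finset (Fin n), sqMon K T ∈ I → d ≤ T.card := by
    intro T hT
    rw [hI, sq_mem] at hT
    obtain ⟨U, hU, hUT⟩ := hT
    exact (hGI U hU).trans (Finset.card_le_card hUT)
  have hdH : ∀ T : Finset (Fin n), sqMon K T ∈ I + H → sqMon K T ∉ I → d + 1 ≤ T.card := by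
    intro T hT hT'
    rw [hIH, sq_mem] at hT
    rw [hI, sq_mem] at hT'
    obtain ⟨U, hU | hU, hUT⟩ := hT
    · exact absurd ⟨U, hU, hUT⟩ hT'
    · exact (hGH U hU).ge.trans (Finset.card_le_card hUT)
  have hC := filt_van _ hIH (d + 1) _ I GI hI hle hdH rfl
  have hA := filt_van _ hI d _ J GJ hJ hJI.le (fun T hT _ => hdI T hT) rfl
  have hB : ExtVan (maxGraded K n) d (idealQuot (I + H) J) :=
    ExtVan.ext (quotIncl hle) (quotProj hJI.le) (quotIncl_inj hle) (quotProj_surj _)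
      (quot_exact _ _) hA (hC.mono (Nat.le_succ d))
  have hAB : ExtVan (maxGraded K n) (d + 1) (idealQuot I J) ↔
      ExtVan (maxGraded K n) (d + 1) (idealQuot (I + H) J) :=
    ⟨fun h => ExtVan.ext (quotIncl hle) (quotProj hJI.le) (quotIncl_inj hle) (quotProj_surj _)
      (quot_exact _ _) h hC,
     fun h => ExtVan.sub (quotIncl hle) (quotProj hJI.le) (quotIncl_inj hle) (quotProj_surj _)
      (quot_exact _ _) h hC⟩
  have hltA := smul_lt hJI GI GJ hI hJ
  have hltB := smul_lt (hJI.trans_le hle) (GI ∪ GH) GJ hIH hJ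
  have key : ∀ e : ℕ∞, (d : ℕ∞) ≤ e → (e = d ↔ ¬ ((d + 1 : ℕ) : ℕ∞) ≤ e) := by
    intro e he
    rw [Nat.cast_add, Nat.cast_one, ENat.add_one_le_iff (ENat.natCast_ne_top d), not_lt]
    exact ⟨fun h => h.le, fun h => le_antisymm h he⟩
  rw [key _ ((le_moduleDepth_iff hltA d).mpr hA), key _ ((le_moduleDepth_iff hltB d).mpr hB),
    le_moduleDepth_iff hltA, le_moduleDepth_iff hltB, hAB]
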